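/- Let M ∈ ℝ^{m×n} be entrywise nonnegative such that the vertices of conv(θ(M)) are non-repeated. Then the supremum ᾱ = sup{α ∈ [0,1] : rank₊(P^α(M)) = rank₊(M)} is attained, i.e., rank₊(P^{ᾱ}(M)) = rank₊(M). -/

import Mathlib

open Matrix BigOperators

/-- The column `j` of `M` normalized to unit ℓ₁-norm. -/
noncomputable def normCol {m n : ℕ} (M : Matrix (Fin m) (Fin n) ℝ) (j : Fin n) : Fin m → ℝ :=
  (∑ i, |M i j|)⁻¹ • fun i => M i j

/-- Column `j` of `M` is nonzero. -/
def colNZ {m n : ℕ} (M : Matrix (Fin m) (Fin n) ℝ) (j : Fin n) : Prop :=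
  (fun i => M i j) ≠ 0

/-- `θ(M)`: the set of ℓ₁-normalized nonzero columns of `M`. -/
noncomputable def thetaCols {m n : ℕ} (M : Matrix (Fin m) (Fin n) ℝ) : Set (Fin m → ℝ) :=
  {x | ∃ j, colNZ M j ∧ x = normCol M j}

/-- The nonnegative rank of `M`. -/
noncomputable def nnRank {m n : ℕ} (M : Matrix (Fin m) (Fin n) ℝ) : ℕ :=
  sInf {r : ℕ | ∃ U : Matrix (Fin m) (Fin r) ℝ, ∃ V : Matrix (Fin r) (Fin n) ℝ,
    (∀ i j, 0 ≤ U i j) ∧ (∀ i j, 0 ≤ V i j) ∧ M = U * V}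

/-- The squared Frobenius norm. -/
noncomputable def frobSq {m n : ℕ} (A : Matrix (Fin m) (Fin n) ℝ) : ℝ :=
  ∑ i, ∑ j, (A i j) ^ 2

/-- Feasibility for problem (tigrel): `B ≥ 0`, zero diagonal, `MB ≤ M` entrywise. -/
def TigrelFeasible {m n : ℕ} (M : Matrix (Fin m) (Fin n) ℝ)
    (B : Matrix (Fin n) (Fin n) ℝ) : Prop :=
  (∀ i j, 0 ≤ B i j) ∧ (∀ i, B i i = 0) ∧ ∀ i j, (M * B) i j ≤ M i j

/-- Optimality for problem (tigrel): feasible and minimizes `‖M - MB‖_F²`. -/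
def TigrelOpt {m n : ℕ} (M : Matrix (Fin m) (Fin n) ℝ)
    (B : Matrix (Fin n) (Fin n) ℝ) : Prop :=
  TigrelFeasible M B ∧
    ∀ B', TigrelFeasible M B' → frobSq (M - M * B) ≤ frobSq (M - M * B')

/-- A monomial matrix: permutation of a diagonal matrix with positive diagonal. -/
def IsMonomial {k : ℕ} (P : Matrix (Fin k) (Fin k) ℝ) : Prop :=
  ∃ (σ : Equiv.Perm (Fin k)) (d : Fin k → ℝ), (∀ i, 0 < d i) ∧
    ∀ i j, P i j = if i = σ j then d j else 0

/-- Every extreme point of `conv(θ(M))` equals `θ(M_{:j})` for exactly one column `j`. -/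
def NonRepeatedVertices {m n : ℕ} (M : Matrix (Fin m) (Fin n) ℝ) : Prop :=
  ∀ x ∈ Set.extremePoints ℝ (convexHull ℝ (thetaCols M)),
    ∃! j : Fin n, colNZ M j ∧ x = normCol M j

/-- Uniqueness of size-`r` exact NMF up to permutation and scaling. -/
def UniqueNMF {m n : ℕ} (r : ℕ) (M : Matrix (Fin m) (Fin n) ℝ) : Prop :=
  ∀ (U₁ U₂ : Matrix (Fin m) (Fin r) ℝ) (V₁ V₂ : Matrix (Fin r) (Fin n) ℝ),
    (∀ i j, 0 ≤ U₁ i j) → (∀ i j, 0 ≤ V₁ i j) →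
    (∀ i j, 0 ≤ U₂ i j) → (∀ i j, 0 ≤ V₂ i j) →
    M = U₁ * V₁ → M = U₂ * V₂ →
    ∃ P : Matrix (Fin r) (Fin r) ℝ, IsMonomial P ∧ U₂ = U₁ * P ∧ V₂ = P⁻¹ * V₁

/-- Separability of a factorization, expressed as a property of the right factor `V`. -/
def SeparableFactor {r n : ℕ} (V : Matrix (Fin r) (Fin n) ℝ) : Prop :=
  ∀ i : Fin r, ∃ j : Fin n, V i j ≠ 0 ∧ ∀ i' : Fin r, i' ≠ i → V i' j = 0

/-- The Frobenius norm. -/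
noncomputable def frobNorm {m n : ℕ} (A : Matrix (Fin m) (Fin n) ℝ) : ℝ :=
  Real.sqrt (∑ i, ∑ j, (A i j) ^ 2)

/-- The Euclidean (ℓ₂) norm of a vector. -/
noncomputable def vecNorm2 {n : ℕ} (x : Fin n → ℝ) : ℝ :=
  Real.sqrt (∑ i, (x i) ^ 2)

/-- The spectral (operator 2-) norm of a matrix. -/
noncomputable def specNorm {m n : ℕ} (A : Matrix (Fin m) (Fin n) ℝ) : ℝ :=
  sSup {c : ℝ | ∃ x : Fin n → ℝ, vecNorm2 x ≤ 1 ∧ c = vecNorm2 (A.mulVec x)}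


noncomputable def sumCLM (m : ℕ) : (Fin m → ℝ) →L[ℝ] ℝ :=
  ∑ i, ContinuousLinearMap.proj (R := ℝ) (φ := fun _ : Fin m => ℝ) i

lemma sumCLM_apply {m : ℕ} (x : Fin m → ℝ) : sumCLM m x = ∑ i, x i := by
  simp [sumCLM]

lemma col_eq {m n : ℕ} (M : Matrix (Fin m) (Fin n) ℝ) (hM : ∀ i j, 0 ≤ M i j) (j : Fin n) :
    (fun i => M i j) = (∑ i, M i j) • normCol M j := by
  have h1 : ∑ i, |M i j| = ∑ i, M i j := Finset.sum_congr rfl fun i _ => abs_of_nonneg (hM i j)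
  unfold normCol
  rw [h1]
  by_cases h : ∑ i, M i j = 0
  · have h2 := (Finset.sum_eq_zero_iff_of_nonneg (fun i _ => hM i j)).1 h
    funext i
    simp [h, h2 i (Finset.mem_univ i)]
  · rw [smul_smul, mul_inv_cancel₀ h, one_smul]

lemma g_col {m n : ℕ} (M : Matrix (Fin m) (Fin n) ℝ) (hM : ∀ i j, 0 ≤ M i j) (j : Fin n)
    (g : (Fin m → ℝ) →L[ℝ] ℝ) :
    g (fun i => M i j) = (∑ i, M i j) * g (normCol M j) := by
  conv_lhs => rw [col_eq M hM j]
  rw [map_smul, smul_eq_mul]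

lemma colNZ_of_sum {m n : ℕ} (M : Matrix (Fin m) (Fin n) ℝ) (j : Fin n)
    (h : ∑ i, M i j ≠ 0) : colNZ M j := by
  intro h0
  apply h
  exact Finset.sum_eq_zero fun i _ => congrFun h0 i

lemma sum_pos_of_colNZ {m n : ℕ} (M : Matrix (Fin m) (Fin n) ℝ) (hM : ∀ i j, 0 ≤ M i j)
    (j : Fin n) (h : colNZ M j) : 0 < ∑ i, M i j := by
  rcases (Finset.sum_nonneg fun i _ => hM i j : 0 ≤ ∑ i, M i j).lt_or_eq with h1 | h1
  · exact h1
  · exfalso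
    apply h
    rw [col_eq M hM j, ← h1, zero_smul]

lemma theta_finite {m n : ℕ} (M : Matrix (Fin m) (Fin n) ℝ) : (thetaCols M).Finite := by
  apply (Set.finite_range (normCol M)).subset
  rintro x ⟨j, -, rfl⟩
  exact ⟨j, rfl⟩

lemma farkas {m n : ℕ} (P : Matrix (Fin m) (Fin n) ℝ) (hP : ∀ i j, 0 ≤ P i j)
    (x : Fin m → ℝ) (hx : ∀ i, 0 ≤ x i)
    (h : ∀ g : (Fin m → ℝ) →L[ℝ] ℝ, (∀ j, 0 ≤ g (fun i => P i j)) → 0 ≤ g x) :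
    ∃ v : Fin n → ℝ, (∀ j, 0 ≤ v j) ∧ x = P *ᵥ v := by
  rcases (Finset.sum_nonneg fun i _ => hx i : 0 ≤ ∑ i, x i).lt_or_eq with hs | hs
  swap
  · have h2 := (Finset.sum_eq_zero_iff_of_nonneg (fun i _ => hx i)).1 hs.symm
    refine ⟨0, fun _ => le_rfl, ?_⟩
    funext i
    simp [h2 i (Finset.mem_univ i)]
  by_contra hcon
  have hsub : convexHull ℝ (thetaCols P) ⊆ {z | ∃ v : Fin n → ℝ, (∀ j, 0 ≤ v j) ∧ z = P *ᵥ v} := by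
    apply convexHull_min
    · rintro z ⟨j, hj, rfl⟩
      refine ⟨Pi.single j (∑ i, |P i j|)⁻¹, ?_, ?_⟩
      · intro k
        have : 0 ≤ (∑ i, |P i j|)⁻¹ := inv_nonneg.2 (Finset.sum_nonneg fun i _ => abs_nonneg _)
        by_cases hk : k = j
        · subst hk; simpa using this
        · simp [hk]
      · funext i
        simp [normCol, mul_comm]
    · rintro a ⟨v, hv, rfl⟩ b ⟨w, hw, rfl⟩ s t hs ht hst
      refine ⟨s • v + t • w, fun j => ?_, ?_⟩
      · exact add_nonneg (mul_nonneg hs (hv j)) (mul_nonneg ht (hw j))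
      · rw [Matrix.mulVec_add, Matrix.mulVec_smul, Matrix.mulVec_smul]
  have hnot : (∑ i, x i)⁻¹ • x ∉ convexHull ℝ (thetaCols P) := by
    intro hmem
    obtain ⟨v, hv, hve⟩ := hsub hmem
    apply hcon
    refine ⟨(∑ i, x i) • v, fun j => mul_nonneg hs.le (hv j), ?_⟩
    rw [Matrix.mulVec_smul, ← hve, smul_smul, mul_inv_cancel₀ hs.ne', one_smul]
  obtain ⟨f, u, hfu, hfK⟩ := geometric_hahn_banach_point_closed (convex_convexHull ℝ (thetaCols P))
    ((theta_finite P).isCompact_convexHull ℝ).isClosed hnot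
  have := h (f - u • sumCLM m) (by
    intro j
    have e : (f - u • sumCLM m) (fun i => P i j) = f (fun i => P i j) - u * ∑ i, P i j := by
      simp [sumCLM_apply]
    rw [e, g_col P hP j f]
    by_cases hj : ∑ i, P i j = 0
    · rw [hj]; simp
    · have h1 := hfK _ (subset_convexHull ℝ _ ⟨j, colNZ_of_sum P j hj, rfl⟩)
      have : 0 ≤ ∑ i, P i j := Finset.sum_nonneg fun i _ => hP i j
      nlinarith)
  have e : (f - u • sumCLM m) x = f x - u * ∑ i, x i := by
    simp [sumCLM_apply]
  rw [e] at this
  rw [map_smul, smul_eq_mul, inv_mul_lt_iff₀ hs] at hfu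
  linarith

lemma key {m n : ℕ} (M : Matrix (Fin m) (Fin n) ℝ) (hM : ∀ i j, 0 ≤ M i j)
    (hvert : NonRepeatedVertices M) (B : Matrix (Fin n) (Fin n) ℝ) (hB : TigrelFeasible M B)
    (α : ℝ) (h0 : 0 ≤ α) (h1 : α ≤ 1) (g : (Fin m → ℝ) →L[ℝ] ℝ)
    (hg : ∀ j, 0 ≤ g (fun i => (M * (1 - α • B) : Matrix (Fin m) (Fin n) ℝ) i j)) (j0 : Fin n) :
    0 ≤ g (fun i => M i j0) := by
  obtain ⟨hB0, hBd, hBM⟩ := hB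
  by_contra! hneg
  have hsnn : ∀ j, 0 ≤ ∑ i, M i j := fun j => Finset.sum_nonneg fun i _ => hM i j
  have hj0 : colNZ M j0 := by
    intro h
    rw [h] at hneg
    simp at hneg
  set K := convexHull ℝ (thetaCols M) with hK
  have hKc : IsCompact K := (theta_finite M).isCompact_convexHull ℝ
  have hmemK : ∀ j, colNZ M j → normCol M j ∈ K := fun j hj =>
    subset_convexHull ℝ _ ⟨j, hj, rfl⟩
  obtain ⟨z, hzK, hz⟩ := hKc.exists_isMinOn ⟨_, hmemK j0 hj0⟩ g.continuous.continuousOn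
  have hF : IsExposed ℝ K {x ∈ K | ∀ y ∈ K, (-g) y ≤ (-g) x} := fun _ => ⟨-g, rfl⟩
  obtain ⟨x, hx⟩ := (hF.isCompact hKc).extremePoints_nonempty
    ⟨z, hzK, fun y hy => by simpa using! hz hy⟩
  have hxmin : ∀ y ∈ K, g x ≤ g y := fun y hy => by simpa using hx.1.2 y hy
  have hxe : x ∈ K.extremePoints ℝ := hF.isExtreme.extremePoints_subset_extremePoints hx
  obtain ⟨j, ⟨hj, hxj⟩, huniq⟩ := hvert x hxe
  have hsj := sum_pos_of_colNZ M hM j hj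
  have hc : g x < 0 := by
    have a := hxmin _ (hmemK j0 hj0)
    have b := sum_pos_of_colNZ M hM j0 hj0
    rw [g_col M hM j0 g] at hneg
    by_contra! hh
    nlinarith
  have hlow : ∀ k, g x * ∑ i, M i k ≤ g (fun i => M i k) := by
    intro k
    rw [g_col M hM k g]
    by_cases hk : ∑ i, M i k = 0
    · simp [hk]
    · have := hxmin _ (hmemK k (colNZ_of_sum M k hk))
      have := hsnn k
      nlinarith
  have hgj : g (fun i => M i j) = g x * ∑ i, M i j := by
    rw [g_col M hM j g, ← hxj, mul_comm]
  have hPj : (fun i => (M * (1 - α • B) : Matrix (Fin m) (Fin n) ℝ) i j)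
      = (fun i => M i j) - α • ∑ k, B k j • (fun i => M i k) := by
    funext i
    rw [Matrix.mul_sub, Matrix.mul_one, Matrix.mul_smul, Matrix.sub_apply, Matrix.smul_apply,
      Matrix.mul_apply]
    simp [mul_comm]
  have hgP := hg j
  rw [hPj, map_sub, map_smul, map_sum, hgj] at hgP
  simp only [map_smul, smul_eq_mul] at hgP
  have hT : ∑ i, (M * B) i j = ∑ k, B k j * ∑ i, M i k := by
    simp only [Matrix.mul_apply, Finset.mul_sum]
    rw [Finset.sum_comm]
    simp [mul_comm]
  have hTle : ∑ k, B k j * ∑ i, M i k ≤ ∑ i, M i j := by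
    rw [← hT]
    exact Finset.sum_le_sum fun i _ => hBM i j
  have hT0 : 0 ≤ ∑ k, B k j * ∑ i, M i k :=
    Finset.sum_nonneg fun k _ => mul_nonneg (hB0 k j) (hsnn k)
  have hsumlow : g x * ∑ k, B k j * ∑ i, M i k ≤ ∑ k, B k j * g (fun i => M i k) := by
    rw [Finset.mul_sum]
    refine Finset.sum_le_sum fun k _ => ?_
    have := mul_le_mul_of_nonneg_left (hlow k) (hB0 k j)
    linarith
  have hTeq : ∑ k, B k j * ∑ i, M i k = ∑ i, M i j := by
    apply le_antisymm hTle
    have a1 : α * (g x * ∑ k, B k j * ∑ i, M i k) ≤ g x * ∑ i, M i j := by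
      have := mul_le_mul_of_nonneg_left hsumlow h0
      linarith
    have a2 : g x * (α * ∑ k, B k j * ∑ i, M i k) ≤ g x * ∑ i, M i j := by linarith
    have a3 := (mul_le_mul_left_of_neg hc).1 a2
    have a4 := mul_le_mul_of_nonneg_right h1 hT0
    linarith
  have hMB : ∀ i, (M * B) i j = M i j := by
    have := (Finset.sum_eq_sum_iff_of_le (fun i _ => hBM i j)).1 (hT.trans hTeq)
    exact fun i => this i (Finset.mem_univ i)
  set w : Fin n → ℝ := fun k => (∑ i, M i j)⁻¹ * (B k j * ∑ i, M i k) with hw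
  have hw0 : ∀ k, 0 ≤ w k := fun k =>
    mul_nonneg (inv_nonneg.2 hsj.le) (mul_nonneg (hB0 k j) (hsnn k))
  have hw1 : ∑ k, w k = 1 := by
    rw [hw, ← Finset.mul_sum, hTeq, inv_mul_cancel₀ hsj.ne']
  have hwx : ∑ k, w k • normCol M k = x := by
    have e : ∑ k, B k j • (fun i => M i k) = (fun i => M i j) := by
      funext i
      rw [← hMB i]
      simp [Matrix.mul_apply, mul_comm]
    have e2 : x = (∑ i, M i j)⁻¹ • ∑ k, B k j • (fun i => M i k) := by
      have := col_eq M hM j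
      rw [← hxj] at this
      rw [e]
      have h3 := congrArg (fun v => (∑ i, M i j)⁻¹ • v) this
      simp only [smul_smul, inv_mul_cancel₀ hsj.ne', one_smul] at h3
      exact h3.symm
    rw [e2, Finset.smul_sum]
    refine Finset.sum_congr rfl fun k _ => ?_
    have := col_eq M hM k
    rw [hw]
    simp only [mul_smul]
    rw [← this]
  have hxnot := ((convex_convexHull ℝ _).mem_extremePoints_iff_mem_sdiff_convexHull_sdiff.1 hxe).2
  apply hxnot
  have hfil : ∑ k with w k ≠ 0, w k • normCol M k = x := by
    rw [← hwx]
    apply Finset.sum_filter_of_ne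
    intro k _ hk h
    apply hk
    rw [h, zero_smul]
  suffices hmain : ∑ k with w k ≠ 0, w k • normCol M k ∈ convexHull ℝ (K \ {x}) by
    rwa [hfil] at hmain
  refine (convex_convexHull ℝ _).sum_mem (fun k _ => hw0 k) (by rw [Finset.sum_filter_ne_zero, hw1]) ?_
  intro k hk
  have hwk : w k ≠ 0 := (Finset.mem_filter.1 hk).2
  apply subset_convexHull
  have hBk : B k j ≠ 0 := by
    intro h; apply hwk; simp [hw, h]
  have hsk : ∑ i, M i k ≠ 0 := by
    intro h; apply hwk; simp [hw, h]
  have hkNZ := colNZ_of_sum M k hsk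
  refine ⟨hmemK k hkNZ, ?_⟩
  intro hkx
  have := huniq k ⟨hkNZ, (Set.mem_singleton_iff.1 hkx).symm⟩
  apply hBk
  rw [this, hBd]

lemma P_nonneg {m n : ℕ} (M : Matrix (Fin m) (Fin n) ℝ) (hM : ∀ i j, 0 ≤ M i j)
    (B : Matrix (Fin n) (Fin n) ℝ) (hB : TigrelFeasible M B)
    (α : ℝ) (h0 : 0 ≤ α) (h1 : α ≤ 1) (i : Fin m) (j : Fin n) :
    0 ≤ (M * (1 - α • B) : Matrix (Fin m) (Fin n) ℝ) i j ∧ (M * (1 - α • B) : Matrix (Fin m) (Fin n) ℝ) i j ≤ M i j := by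
  have e : (M * (1 - α • B) : Matrix (Fin m) (Fin n) ℝ) i j = M i j - α * (M * B) i j := by
    simp [Matrix.mul_sub]
  have a : 0 ≤ (M * B) i j := by
    rw [Matrix.mul_apply]
    exact Finset.sum_nonneg fun k _ => mul_nonneg (hM i k) (hB.1 k j)
  have b := hB.2.2 i j
  rw [e]
  constructor <;> nlinarith

lemma nnRank_spec {m n : ℕ} (P : Matrix (Fin m) (Fin n) ℝ) (hP : ∀ i j, 0 ≤ P i j) :
    ∃ U : Matrix (Fin m) (Fin (nnRank P)) ℝ, ∃ V : Matrix (Fin (nnRank P)) (Fin n) ℝ,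
    (∀ i j, 0 ≤ U i j) ∧ (∀ i j, 0 ≤ V i j) ∧ P = U * V := by
  have : nnRank P ∈ {r : ℕ | ∃ U : Matrix (Fin m) (Fin r) ℝ, ∃ V : Matrix (Fin r) (Fin n) ℝ,
    (∀ i j, 0 ≤ U i j) ∧ (∀ i j, 0 ≤ V i j) ∧ P = U * V} := by
    apply Nat.sInf_mem
    refine ⟨n, P, 1, hP, ?_, by simp⟩
    intro i j
    rw [Matrix.one_apply]
    split_ifs <;> norm_num
  exact this

lemma nnRank_ge {m n : ℕ} (M : Matrix (Fin m) (Fin n) ℝ) (hM : ∀ i j, 0 ≤ M i j)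
    (hvert : NonRepeatedVertices M) (B : Matrix (Fin n) (Fin n) ℝ) (hB : TigrelFeasible M B)
    (α : ℝ) (h0 : 0 ≤ α) (h1 : α ≤ 1) : nnRank M ≤ nnRank (M * (1 - α • B)) := by
  have hP : ∀ i j, 0 ≤ (M * (1 - α • B) : Matrix (Fin m) (Fin n) ℝ) i j := fun i j => (P_nonneg M hM B hB α h0 h1 i j).1
  have := fun j => farkas _ hP (fun i => M i j) (fun i => hM i j)
    (fun g hg => key M hM hvert B hB α h0 h1 g hg j)
  choose v hv hv2 using this
  obtain ⟨U, W, hU, hW, hUW⟩ := nnRank_spec _ hP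
  apply Nat.sInf_le
  refine ⟨U, W * (Matrix.of fun k j => v j k), hU, ?_, ?_⟩
  · intro i j
    rw [Matrix.mul_apply]
    exact Finset.sum_nonneg fun k _ => mul_nonneg (hW i k) (hv j k)
  · rw [← Matrix.mul_assoc, ← hUW]
    ext i j
    have := congrFun (hv2 j) i
    simp only [Matrix.mulVec, dotProduct] at this
    rw [this, Matrix.mul_apply]
    rfl

def bdd (m n r : ℕ) (C : ℝ) : Set (Matrix (Fin m) (Fin n) ℝ) :=
  (fun p : (Fin m → Fin r → ℝ) × (Fin r → Fin n → ℝ) =>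
    (Matrix.of p.1 * Matrix.of p.2 : Matrix (Fin m) (Fin n) ℝ)) ''
    (Set.Icc (fun _ _ => 0) (fun _ _ => 1) ×ˢ Set.Icc (fun _ _ => 0) (fun _ _ => C))

lemma bdd_closed (m n r : ℕ) (C : ℝ) : IsClosed (bdd m n r C) := by
  apply IsCompact.isClosed
  apply IsCompact.image
  · exact isCompact_Icc.prod isCompact_Icc
  · apply Continuous.matrix_mul
    · exact continuous_fst
    · exact continuous_snd

lemma mem_bdd {m n r : ℕ} (C : ℝ) (U : Matrix (Fin m) (Fin r) ℝ) (V : Matrix (Fin r) (Fin n) ℝ)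
    (hU : ∀ i j, 0 ≤ U i j) (hV : ∀ i j, 0 ≤ V i j) (hC : ∀ j, ∑ i, (U * V) i j ≤ C) :
    U * V ∈ bdd m n r C := by
  have hs : ∀ l, 0 ≤ ∑ i, U i l := fun l => Finset.sum_nonneg fun i _ => hU i l
  refine ⟨(fun i l => U i l / ∑ i, U i l, fun l j => (∑ i, U i l) * V l j),
    ⟨⟨?_, ?_⟩, ⟨?_, ?_⟩⟩, ?_⟩
  · intro i l
    exact div_nonneg (hU i l) (hs l)
  · intro i l
    exact div_le_one_of_le₀ (Finset.single_le_sum (f := fun i => U i l)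
      (fun i _ => hU i l) (Finset.mem_univ i)) (hs l)
  · intro l j
    exact mul_nonneg (hs l) (hV l j)
  · intro l j
    refine le_trans ?_ (hC j)
    simp only [Matrix.mul_apply]
    rw [Finset.sum_mul]
    refine Finset.sum_le_sum fun i _ => ?_
    exact Finset.single_le_sum (f := fun l => U i l * V l j)
      (fun l _ => mul_nonneg (hU i l) (hV l j)) (Finset.mem_univ l)
  · ext i j
    simp only [Matrix.mul_apply, Matrix.of_apply]
    refine Finset.sum_congr rfl fun l _ => ?_
    by_cases h : ∑ i, U i l = 0
    · have h2 := (Finset.sum_eq_zero_iff_of_nonneg (fun i _ => hU i l)).1 h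
      simp [h2 i (Finset.mem_univ i)]
    · field_simp

lemma nnRank_le_of_bdd {m n r : ℕ} {C : ℝ} {P : Matrix (Fin m) (Fin n) ℝ}
    (h : P ∈ bdd m n r C) : nnRank P ≤ r := by
  obtain ⟨⟨U, V⟩, ⟨⟨h1, h2⟩, ⟨h3, h4⟩⟩, rfl⟩ := h
  apply Nat.sInf_le
  exact ⟨Matrix.of U, Matrix.of V, fun i j => h1 i j, fun i j => h3 i j, rfl⟩

/-- the supremum `ᾱ = sup{α ∈ [0,1] : rank₊(P^α(M)) = rank₊(M)}` is
attained: `rank₊(P^ᾱ(M)) = rank₊(M)`. -/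
theorem stmt18 {m n : ℕ} (M : Matrix (Fin m) (Fin n) ℝ) (hM : ∀ i j, 0 ≤ M i j)
    (hvert : NonRepeatedVertices M)
    (B : Matrix (Fin n) (Fin n) ℝ) (hB : TigrelOpt M B) :
    nnRank (M * (1 - (sSup {α : ℝ | α ∈ Set.Icc (0 : ℝ) 1 ∧
        nnRank (M * (1 - α • B)) = nnRank M}) • B)) = nnRank M := by
  set A := {α : ℝ | α ∈ Set.Icc (0 : ℝ) 1 ∧ nnRank (M * (1 - α • B)) = nnRank M} with hA
  have hne : A.Nonempty := ⟨0, ⟨le_rfl, zero_le_one⟩, by simp⟩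
  have hbd : BddAbove A := ⟨1, fun α h => h.1.2⟩
  have hcl := csSup_mem_closure hne hbd
  set C : ℝ := ∑ j, ∑ i, M i j with hC
  have hsub : A ⊆ Set.Icc (0 : ℝ) 1 ∩ (fun α : ℝ => M * (1 - α • B)) ⁻¹' bdd m n (nnRank M) C := by
    rintro α ⟨hα, hr⟩
    refine ⟨hα, ?_⟩
    have hP := P_nonneg M hM B hB.1 α hα.1 hα.2
    obtain ⟨U, V, hU, hV, hUV⟩ := nnRank_spec _ (fun i j => (hP i j).1)
    rw [Set.mem_preimage, ← hr]
    have := mem_bdd C U V hU hV (by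
      intro j
      rw [← hUV]
      refine le_trans (Finset.sum_le_sum fun i _ => (hP i j).2) ?_
      exact Finset.single_le_sum (f := fun j => ∑ i, M i j)
        (fun j _ => Finset.sum_nonneg fun i _ => hM i j) (Finset.mem_univ j))
    rwa [← hUV] at this
  have hclosed : IsClosed
      (Set.Icc (0 : ℝ) 1 ∩ (fun α : ℝ => M * (1 - α • B)) ⁻¹' bdd m n (nnRank M) C) := by
    refine isClosed_Icc.inter ((bdd_closed _ _ _ _).preimage ?_)
    fun_prop
  have hmem := hclosed.closure_subset_iff.2 hsub hcl
  exact le_antisymm (nnRank_le_of_bdd hmem.2)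
    (nnRank_ge M hM hvert B hB.1 _ hmem.1.1 hmem.1.2)
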